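/- Let (w_n) be a real sequence satisfying w_{n+1} = w_n − w_n³ for all n ∈ ℕ, with initial value satisfying 3w₀² ≤ 1. Then for all n ∈ ℕ, |w_n| ≤ |w₀| / √(1 + 2w₀²·n). In particular |w_n| = O(n^{−1/2}) as n → ∞. -/

import Mathlib

/-!
Put `u n = w n ^ 2`. Since `(1 - u)² (1 + 2u) = 1 - u² (3 - 2u)`, the cubic recursion gives
`u (n + 1) ≤ u n / (1 + 2 u n)` as long as `u n ≤ 3 / 2`, a range which each step preserves because
it makes `u` smaller. In terms of `1 / u`, which plays the role of the conserved quantity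
`1 / w² - 2 t` of `w' = -w³`, this says that each step adds at least `2`. Hence
`1 / u n ≥ 1 / u 0 + 2 n`, and dropping `1 / u 0` gives a rate independent of `w 0`.
-/

section OrderedSemiring

variable {R : Type*} [CommSemiring R] [LinearOrder R] [IsStrictOrderedRing R]

/- Division-free form of `b / a ≤ 1 / u 0 → b / a + c * n ≤ 1 / u n`; the choice `b = 0` turns it
into a bound that does not depend on `u 0`. -/
theorem mul_add_le_of_succ_mul_one_add_le {u : ℕ → R} {a b c : R} (hu : ∀ n, 0 ≤ u n)
    (ha : 0 ≤ a) (hb : 0 ≤ b) (hc : 0 ≤ c) (h0 : u 0 * b ≤ a)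
    (hstep : ∀ n, u (n + 1) * (1 + c * u n) ≤ u n) (n : ℕ) :
    u n * (b + c * n * a) ≤ a := by
  induction n with
  | zero => simpa using h0
  | succ n ih =>
    have hpos : 0 < 1 + c * u n := add_pos_of_pos_of_nonneg one_pos (mul_nonneg hc (hu n))
    refine le_of_mul_le_mul_left ?_ hpos
    calc (1 + c * u n) * (u (n + 1) * (b + c * (n + 1 : ℕ) * a))
        = u (n + 1) * (1 + c * u n) * (b + c * (n + 1 : ℕ) * a) := by ring
      _ ≤ u n * (b + c * (n + 1 : ℕ) * a) := by gcongr; exact hstep n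
      _ = u n * (b + c * n * a) + c * u n * a := by push_cast; ring
      _ ≤ a + c * u n * a := by gcongr
      _ = (1 + c * u n) * a := by ring

end OrderedSemiring

section OrderedRing

variable {R : Type*} [CommRing R] [LinearOrder R] [IsStrictOrderedRing R]

theorem sq_sub_cube_mul_one_add_le {x : R} (hx : 2 * x ^ 2 ≤ 3) :
    (x - x ^ 3) ^ 2 * (1 + 2 * x ^ 2) ≤ x ^ 2 := by
  have hdefect : 0 ≤ x ^ 6 * (3 - 2 * x ^ 2) :=
    mul_nonneg (by positivity) (sub_nonneg.2 hx)
  calc (x - x ^ 3) ^ 2 * (1 + 2 * x ^ 2) = x ^ 2 - x ^ 6 * (3 - 2 * x ^ 2) := by ring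
    _ ≤ x ^ 2 := sub_le_self _ hdefect

theorem sq_sub_cube_le_sq {x : R} (hx : 2 * x ^ 2 ≤ 3) : (x - x ^ 3) ^ 2 ≤ x ^ 2 :=
  (le_mul_of_one_le_right (sq_nonneg _) (le_add_of_nonneg_right (by positivity))).trans
    (sq_sub_cube_mul_one_add_le hx)

variable {w : ℕ → R}

theorem two_mul_sq_le_three_of_cubic_recursion (hw : ∀ n, w (n + 1) = w n - w n ^ 3)
    (h0 : 2 * w 0 ^ 2 ≤ 3) (n : ℕ) : 2 * w n ^ 2 ≤ 3 := by
  induction n with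
  | zero => exact h0
  | succ n ih =>
    rw [hw]
    exact (mul_le_mul_of_nonneg_left (sq_sub_cube_le_sq ih) zero_le_two).trans ih

theorem sq_succ_mul_one_add_le_of_cubic_recursion (hw : ∀ n, w (n + 1) = w n - w n ^ 3)
    (h0 : 2 * w 0 ^ 2 ≤ 3) (n : ℕ) :
    w (n + 1) ^ 2 * (1 + 2 * w n ^ 2) ≤ w n ^ 2 := by
  rw [hw]
  exact sq_sub_cube_mul_one_add_le (two_mul_sq_le_three_of_cubic_recursion hw h0 n)

theorem sq_mul_add_le_of_cubic_recursion (hw : ∀ n, w (n + 1) = w n - w n ^ 3)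
    (h0 : 2 * w 0 ^ 2 ≤ 3) {a b : R} (ha : 0 ≤ a) (hb : 0 ≤ b) (hab : w 0 ^ 2 * b ≤ a) (n : ℕ) :
    w n ^ 2 * (b + 2 * n * a) ≤ a :=
  mul_add_le_of_succ_mul_one_add_le (u := fun n => w n ^ 2) (fun n => sq_nonneg (w n)) ha hb
    zero_le_two hab (sq_succ_mul_one_add_le_of_cubic_recursion hw h0) n

end OrderedRing

theorem abs_le_sqrt_div_sqrt_of_sq_mul_le {x a t : ℝ} (ht : 0 < t) (h : x ^ 2 * t ≤ a) :
    |x| ≤ √a / √t := by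
  rw [← Real.sqrt_div' a ht.le]
  exact Real.abs_le_sqrt ((le_div_iff₀ ht).2 h)

theorem stmt_19_general (w : ℕ → ℝ) (hw : ∀ n, w (n + 1) = w n - w n ^ 3)
    (h0 : 2 * w 0 ^ 2 ≤ 3) :
    (∀ n : ℕ, |w n| ≤ |w 0| / √(1 + 2 * w 0 ^ 2 * n)) ∧
    ∀ n : ℕ, 1 ≤ n → |w n| ≤ √(1 / 2) / √n := by
  constructor
  · intro n
    have hsq : w n ^ 2 * (1 + 2 * n * w 0 ^ 2) ≤ w 0 ^ 2 :=
      sq_mul_add_le_of_cubic_recursion hw h0 (sq_nonneg _) zero_le_one (mul_one _).le n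
    rw [← Real.sqrt_sq_eq_abs (w 0)]
    exact abs_le_sqrt_div_sqrt_of_sq_mul_le (by positivity) (by linarith)
  · intro n hn
    have hsq : w n ^ 2 * (0 + 2 * n * 1) ≤ 1 :=
      sq_mul_add_le_of_cubic_recursion hw h0 zero_le_one le_rfl (by simp) n
    exact abs_le_sqrt_div_sqrt_of_sq_mul_le (Nat.cast_pos.2 hn) (by linarith)

/-- for the recursion `w_{n+1} = w_n - w_n³` with `3w₀² ≤ 1`, one
has `|w_n| ≤ |w₀| / √(1 + 2w₀²n)` for all `n`; in particular
`|w_n| = O(n^{-1/2})`. -/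
theorem stmt_19 (w : ℕ → ℝ) (hw : ∀ n, w (n + 1) = w n - (w n) ^ 3)
    (h0 : 3 * (w 0) ^ 2 ≤ 1) :
    (∀ n : ℕ, |w n| ≤ |w 0| / Real.sqrt (1 + 2 * (w 0) ^ 2 * n)) ∧
    ∃ C : ℝ, ∀ n : ℕ, 1 ≤ n → |w n| ≤ C / Real.sqrt n :=
  (stmt_19_general w hw (by linarith [sq_nonneg (w 0)])).imp_right fun hdecay => ⟨_, hdecay⟩
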